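/- arXiv:2007.07392 — 10 statements merged into one kernel-verified Lean document; each statement's English description precedes it below -/
import Mathlib

section
/- Let K be a number field of degree n, let M be a full module in K, and let ε ∈ 𝒰_M⁺ be nontorsion (i.e., ε is not a root of unity). Fix a nonzero β ∈ M and a ℤ-basis W = {w₁, …, w_n} of M, and define the coordinate sequences x_i : ℕ → ℤ by β·ε^k = x₁(k)w₁ + ⋯ + x_n(k)w_n. If the minimal polynomial of ε over ℚ is X^d − s₁X^{d−1} − ⋯ − s_d, then each x_i satisfies the recurrence x_i(k+d) = s₁·x_i(k+d−1) + ⋯ + s_d·x_i(k) for all k ≥ 0. Furthermore, if [ℚ(ε) : ℚ] = [K : ℚ], then this recurrence is of minimal order, i.e., the minimal polynomial of each sequence x_i equals the minimal polynomial of ε. -/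
open Polynomial IntermediateField

theorem aux_deg (m : ℕ) (r : Fin m → ℚ) :
    (∑ j : Fin m, C (r j) * X ^ (m - 1 - (j : ℕ)) : ℚ[X]).degree < (m : WithBot ℕ) := by
  rw [← Polynomial.mem_degreeLT]
  refine Submodule.sum_mem _ fun j _ => ?_
  rw [Polynomial.mem_degreeLT]
  refine lt_of_le_of_lt (degree_C_mul_X_pow_le _ _) ?_
  have := j.2
  exact_mod_cast (by omega : m - 1 - (j : ℕ) < m)

/-- Corollary 1. Coordinate sequences of `β·ε^k` with respect to a
ℤ-basis `W` of a full module `M` in a number field `K`, where `ε ∈ 𝒰_M⁺` is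
nontorsion, satisfy the linear recurrence whose characteristic polynomial is the
minimal polynomial of `ε`; if moreover `[ℚ(ε) : ℚ] = [K : ℚ]`, this recurrence
has minimal order. -/
theorem coordinate_sequences_recurrence
    (K : Type*) [Field K] [NumberField K]
    (n : ℕ) (hn : n = Module.finrank ℚ K)
    (W : Fin n → K) (hW : LinearIndependent ℚ W)
    (M : Submodule ℤ K) (hM : M = Submodule.span ℤ (Set.range W))
    (ε : K) (hεM : ∀ z ∈ M, ε * z ∈ M)
    (hεnorm : Algebra.norm ℚ ε = 1)
    (hεnt : ∀ j : ℕ, 0 < j → ε ^ j ≠ 1)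
    (β : K) (hβM : β ∈ M) (hβ : β ≠ 0)
    (x : Fin n → ℕ → ℤ)
    (hx : ∀ k : ℕ, β * ε ^ k = ∑ i : Fin n, (x i k : K) * W i)
    (d : ℕ) (s : Fin d → ℚ)
    (hmin : minpoly ℚ ε = X ^ d - ∑ j : Fin d, C (s j) * X ^ (d - 1 - (j : ℕ))) :
    (∀ i : Fin n, ∀ k : ℕ,
      ((x i (k + d) : ℚ)) = ∑ j : Fin d, s j * (x i (k + (d - 1 - (j : ℕ))) : ℚ)) ∧
    (Module.finrank ℚ (ℚ⟮ε⟯ : IntermediateField ℚ K) = Module.finrank ℚ K →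
      ∀ i : Fin n, ∀ m : ℕ, 1 ≤ m → ∀ r : Fin m → ℚ,
        (∀ k : ℕ, ((x i (k + m) : ℚ)) =
          ∑ j : Fin m, r j * (x i (k + (m - 1 - (j : ℕ))) : ℚ)) →
        d ≤ m) := by
  classical
  have hcard : Fintype.card (Fin n) = Module.finrank ℚ K := by simpa using hn
  have hne : 0 < n := hn ▸ Module.finrank_pos
  haveI : Nonempty (Fin n) := ⟨⟨0, hne⟩⟩
  let b := basisOfLinearIndependentOfCardEqFinrank hW hcard
  have hb : ∀ i, b i = W i := fun i => by simp [b]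
  have hφ : ∀ i k, b.coord i (β * ε ^ k) = (x i k : ℚ) := by
    intro i k
    have h : β * ε ^ k = ∑ i : Fin n, (x i k : ℚ) • b i := by
      rw [hx k]
      refine Finset.sum_congr rfl fun j _ => ?_
      rw [hb, Algebra.smul_def]
      simp
    rw [h, Module.Basis.coord_apply, b.repr_sum_self]
  have key : ∀ (m : ℕ) (r : Fin m → ℚ) (i : Fin n) (k : ℕ),
      b.coord i (β * aeval ε (X ^ m - ∑ j : Fin m, C (r j) * X ^ (m - 1 - (j : ℕ)) : ℚ[X]) * ε ^ k)
        = (x i (k + m) : ℚ) - ∑ j : Fin m, r j * (x i (k + (m - 1 - (j : ℕ))) : ℚ) := by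
    intro m r i k
    have h : β * aeval ε (X ^ m - ∑ j : Fin m, C (r j) * X ^ (m - 1 - (j : ℕ)) : ℚ[X]) * ε ^ k
        = β * ε ^ (k + m) - ∑ j : Fin m, r j • (β * ε ^ (k + (m - 1 - (j : ℕ)))) := by
      simp only [map_sub, map_sum, map_mul, map_pow, aeval_X, aeval_C, mul_sub, sub_mul,
        Finset.mul_sum, Finset.sum_mul, Algebra.smul_def, pow_add]
      congr 1
      · ring
      · exact Finset.sum_congr rfl fun j _ => by ring
    rw [h, map_sub, map_sum, hφ]
    simp only [map_smul, hφ, smul_eq_mul]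
  refine ⟨fun i k => ?_, fun hfin i m _ r hr => ?_⟩
  · have h := key d s i k
    rw [← hmin, minpoly.aeval] at h
    simp only [mul_zero, zero_mul, map_zero] at h
    linarith
  · set P : ℚ[X] := X ^ m - ∑ j : Fin m, C (r j) * X ^ (m - 1 - (j : ℕ)) with hP
    have hPdeg : P.degree = m := by
      rw [hP, degree_sub_eq_left_of_degree_lt] <;> rw [degree_X_pow]
      exact aux_deg m r
    have hddeg : (minpoly ℚ ε).degree = d := by
      rw [hmin, degree_sub_eq_left_of_degree_lt] <;> rw [degree_X_pow]
      exact aux_deg d s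
    have hPm : P.Monic := monic_X_pow_sub (aux_deg m r)
    by_cases h0 : aeval ε P = 0
    · have := minpoly.min ℚ ε hPm h0
      rw [hPdeg, hddeg] at this
      exact_mod_cast this
    · exfalso
      have hz : ∀ q : ℚ[X], b.coord i (β * aeval ε P * aeval ε q) = 0 := by
        intro q
        induction q using Polynomial.induction_on' with
        | add p q hp hq => rw [map_add, mul_add, map_add, hp, hq, add_zero]
        | monomial k a =>
          rw [aeval_monomial, mul_left_comm, ← Algebra.smul_def, map_smul, key m r i k, hr k,
            sub_self, smul_zero]
      have htop : (ℚ⟮ε⟯ : IntermediateField ℚ K) = ⊤ :=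
        IntermediateField.eq_of_le_of_finrank_eq le_top (by rw [hfin, IntermediateField.finrank_top'])
      have hmem : W i / (β * aeval ε P) ∈ (ℚ⟮ε⟯ : IntermediateField ℚ K) := by
        rw [htop]; trivial
      rw [← IntermediateField.mem_toSubalgebra,
        IntermediateField.adjoin_simple_toSubalgebra_of_isAlgebraic (Algebra.IsAlgebraic.isAlgebraic ε),
        Algebra.adjoin_singleton_eq_range_aeval] at hmem
      obtain ⟨q, hq⟩ := hmem
      have h1 := hz q
      have hq' : aeval ε q = W i / (β * aeval ε P) := hq
      rw [hq', mul_div_cancel₀ _ (mul_ne_zero hβ h0), ← hb] at h1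
      simp at h1
end

section
/- Let K be a real quadratic field and M a full module in K. Let ε ∈ 𝒰_M⁺ with ε ≠ ±1 (so ε is nontorsion), and fix a nonzero β ∈ M. Then there exists a ℤ-basis W = {w₁, w₂} of M such that, writing β·ε^k = x₁(k)w₁ + x₂(k)w₂ with x₁(k), x₂(k) ∈ ℤ, the sequence x₁ is a linear divisibility sequence. -/
/-- Proposition 3. For a full module `M` in a real quadratic field
`K`, a nontorsion `ε ∈ 𝒰_M⁺` (norm one, `ε ≠ ±1`), and a nonzero `β ∈ M`, there
is a ℤ-basis `{w₁, w₂}` of `M` such that, writing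
`β·ε^k = x₁(k)w₁ + x₂(k)w₂`, the sequence `x₁` is a linear divisibility
sequence. -/
theorem real_quadratic_coordinate_LDS
    (K : Type*) [Field K] [NumberField K]
    (hK2 : Module.finrank ℚ K = 2) (φ : K →+* ℝ)
    (t : Fin 2 → K) (ht : LinearIndependent ℚ t)
    (M : Submodule ℤ K) (hM : M = Submodule.span ℤ (Set.range t))
    (ε : K) (hεM : ∀ z ∈ M, ε * z ∈ M)
    (hεnorm : Algebra.norm ℚ ε = 1) (hε1 : ε ≠ 1) (hε2 : ε ≠ -1)
    (β : K) (hβM : β ∈ M) (hβ : β ≠ 0) :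
    ∃ w : Fin 2 → K,
      Submodule.span ℤ (Set.range w) = M ∧ LinearIndependent ℤ w ∧
      ∃ x : Fin 2 → ℕ → ℤ,
        (∀ k : ℕ, β * ε ^ k = ∑ i : Fin 2, (x i k : K) * w i) ∧
        (∀ n m : ℕ, 0 < n → 0 < m → n ∣ m → x 0 n ∣ x 0 m) := by
  have htZ : ∀ a b : ℤ, (a : K) * t 0 + (b : K) * t 1 = 0 → a = 0 ∧ b = 0 := by
    intro a b h
    have h2 := (LinearIndependent.pair_iff (R := ℚ) (x := t 0) (y := t 1)).1 (by
      have e : ![t 0, t 1] = t := by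
        ext i; fin_cases i <;> rfl
      rw [e]; exact ht) (a : ℚ) (b : ℚ) (by
        rw [Algebra.smul_def, Algebra.smul_def]; simpa using h)
    exact_mod_cast h2
  have hmem : ∀ w : Fin 2 → K, ∀ z : K, z ∈ Submodule.span ℤ (Set.range w) ↔
      ∃ a b : ℤ, z = (a : K) * w 0 + (b : K) * w 1 := by
    intro w z
    rw [Submodule.mem_span_range_iff_exists_fun]
    constructor
    · rintro ⟨c, hc⟩
      exact ⟨c 0, c 1, by rw [← hc]; simp [Fin.sum_univ_two]⟩
    · rintro ⟨a, b, h⟩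
      exact ⟨![a, b], by rw [h]; simp [Fin.sum_univ_two]⟩
  obtain ⟨a, b, hab⟩ := (hmem t β).1 (hM ▸ hβM)
  have hne : a ≠ 0 ∨ b ≠ 0 := by
    by_contra! h
    apply hβ
    rw [hab, h.1, h.2]; simp
  obtain ⟨g, a', b', p, q, ha, hb, hpq⟩ : ∃ g a' b' p q : ℤ, a = g * a' ∧ b = g * b' ∧
      p * a' + q * b' = 1 := by
    have hg : (Int.gcd a b : ℤ) ≠ 0 := by
      intro h
      have := Int.gcd_eq_zero_iff.1 (by exact_mod_cast h : Int.gcd a b = 0)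
      rcases hne with h | h
      · exact h this.1
      · exact h this.2
    obtain ⟨a', ha⟩ := Int.gcd_dvd_left a b
    obtain ⟨b', hb⟩ := Int.gcd_dvd_right a b
    refine ⟨Int.gcd a b, a', b', Int.gcdA a b, Int.gcdB a b, ha, hb, ?_⟩
    apply mul_left_cancel₀ hg
    have := Int.gcd_eq_gcd_ab a b
    linear_combination (-1 : ℤ) * this - (Int.gcdA a b) * ha - (Int.gcdB a b) * hb
  have hpqK : (p : K) * a' + q * b' = 1 := by exact_mod_cast hpq
  obtain ⟨w0, hw0⟩ : ∃ w0 : K, w0 = (q : K) * t 0 - p * t 1 := ⟨_, rfl⟩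
  obtain ⟨w1, hw1⟩ : ∃ w1 : K, w1 = (a' : K) * t 0 + b' * t 1 := ⟨_, rfl⟩
  have hβw : β = g * w1 := by
    rw [hab, hw1, ha, hb]; push_cast; ring
  have hMw : ∀ z, z ∈ M ↔ ∃ c d : ℤ, z = (c : K) * w0 + d * w1 := by
    intro z
    rw [hM, hmem]
    constructor
    · rintro ⟨c, d, h⟩
      refine ⟨c * b' - d * a', c * p + d * q, ?_⟩
      rw [h, hw0, hw1]; push_cast
      linear_combination (-(c : K) * t 0 - d * t 1) * hpqK
    · rintro ⟨c, d, h⟩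
      refine ⟨c * q + d * a', -c * p + d * b', ?_⟩
      rw [h, hw0, hw1]; push_cast; ring
  have hind : ∀ c d : ℤ, (c : K) * w0 + d * w1 = 0 → c = 0 ∧ d = 0 := by
    intro c d h
    have h2 := htZ (c * q + d * a') (-c * p + d * b') (by
      rw [hw0, hw1] at h; push_cast; linear_combination h)
    constructor
    · linear_combination b' * h2.1 - a' * h2.2 - c * hpq
    · linear_combination p * h2.1 + q * h2.2 - d * hpq
  have hpow : ∀ n : ℕ, ∀ z ∈ M, ε ^ n * z ∈ M := by
    intro n
    induction n with
    | zero => intro z hz; simpa using hz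
    | succ n ih =>
      intro z hz
      rw [pow_succ, mul_assoc]
      exact ih _ (hεM z hz)
  have hw1M : w1 ∈ M := (hMw _).2 ⟨0, 1, by simp⟩
  have hex : ∀ k : ℕ, ∃ u v : ℤ, ε ^ k * w1 = (u : K) * w0 + v * w1 :=
    fun k => (hMw _).1 (hpow k _ hw1M)
  choose u v huv using hex
  have key : ∀ n k : ℕ, ∃ z ∈ M, ε ^ (n * k) * w1 = (v n : K) ^ k * w1 + u n * z := by
    intro n k
    induction k with
    | zero => exact ⟨0, M.zero_mem, by simp⟩
    | succ k ih =>
      obtain ⟨z, hz, h⟩ := ih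
      obtain ⟨c, d, hcd⟩ := (hMw _).1 (hpow n z hz)
      refine ⟨((v n ^ k + c : ℤ) : K) * w0 + d * w1, (hMw _).2 ⟨_, _, rfl⟩, ?_⟩
      rw [Nat.mul_succ, pow_add]
      push_cast
      linear_combination ε ^ n * h + (v n : K) ^ k * huv n + u n * hcd
  refine ⟨![w0, w1], ?_, ?_, ![fun k => g * u k, fun k => g * v k], ?_, ?_⟩
  · ext z
    rw [hmem, hMw]; simp
  · rw [LinearIndependent.pair_iff]
    intro c d h
    exact hind c d (by simpa using h)
  · intro k
    simp only [Fin.sum_univ_two, Matrix.cons_val_zero, Matrix.cons_val_one]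
    push_cast
    rw [hβw]
    linear_combination (g : K) * huv k
  · rintro n m - - ⟨k, rfl⟩
    simp only [Matrix.cons_val_zero]
    apply mul_dvd_mul_left
    obtain ⟨z, hz, h⟩ := key n k
    obtain ⟨c, d, hcd⟩ := (hMw _).1 hz
    have h3 := hind (u (n * k) - u n * c) (v (n * k) - v n ^ k - u n * d) (by
      push_cast
      linear_combination h - huv (n * k) + u n * hcd)
    exact ⟨c, by linear_combination h3.1⟩
end

section
/- Let a and T be nonzero integers, and let x : ℕ → ℤ be the sequence determined by the initial conditions x(0) = 0, x(1) = a, x(2) = a, x(3) = a·(T+1) and the recurrence x(k+4) = T·x(k+2) − x(k) for all k ≥ 0. Then x is a linear divisibility sequence: for all positive integers n and m, n ∣ m implies x(n) ∣ x(m). -/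
theorem lehmer_add (R : ℤ) (u : ℕ → ℤ) (h0 : u 0 = 0) (h1 : u 1 = 1)
    (he : ∀ k, u (2*k+2) = u (2*k+1) - u (2*k))
    (ho : ∀ k, u (2*k+3) = R * u (2*k+2) - u (2*k+1)) (j i : ℕ) :
    u (2*(i+j)+1) = u (2*i+1) * u (2*j+1) - R * u (2*i) * u (2*j) ∧
    u (2*(i+j)+2) = u (2*i+2) * u (2*j+1) - u (2*i+1) * u (2*j) ∧
    u (2*(i+j)+2) = u (2*i+1) * u (2*j+2) - u (2*i) * u (2*j+1) ∧
    u (2*(i+j)+3) = R * u (2*i+2) * u (2*j+2) - u (2*i+1) * u (2*j+1) := by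
  induction i with
  | zero =>
    have h2 : u 2 = 1 := by have := he 0; simp [h0, h1] at this; exact this
    have e1 := he j
    have e2 := ho j
    simp only [Nat.zero_add, Nat.mul_zero, h0, h1, h2]
    refine ⟨by ring, by rw [e1]; ring, by ring, by rw [e2]; ring⟩
  | succ i ih =>
    obtain ⟨A, B, C, D⟩ := ih
    have e1 := he (i+j)
    have e2 := ho (i+j)
    have e3 := he (i+j+1)
    have e4 := ho (i+j+1)
    have f0 := he i
    have f2 := ho i
    have f3 := he (i+1)
    have g1 := he j
    have k1 : i + 1 + j = i + j + 1 := by ring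
    rw [k1]
    simp only [Nat.mul_add, Nat.mul_one, Nat.add_assoc, Nat.reduceAdd] at *
    have A' : u (2*i + (2*j+3)) = u (2*i+3) * u (2*j+1) - R * u (2*i+2) * u (2*j) := by
      rw [e2, f2]; linear_combination R * B - A + R * u (2*j) * f0
    have C' : u (2*i + (2*j+4)) = u (2*i+3) * u (2*j+2) - u (2*i+2) * u (2*j+1) := by
      rw [e3, f2]; linear_combination D - C + u (2*j+1) * f0
    have B' : u (2*i + (2*j+4)) = u (2*i+4) * u (2*j+1) - u (2*i+3) * u (2*j) := by
      rw [e3, f3]; linear_combination A' - B + u (2*j) * f2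
    refine ⟨A', B', C', ?_⟩
    rw [e4, f3]; linear_combination R * C' - D + u (2*j+1) * f2

/-- The order-4 recurrence sequence with initial conditions
`0, a, a, a(T+1)` and recurrence `x(k+4) = T·x(k+2) − x(k)` is a linear
divisibility sequence. -/
theorem order_four_recurrence_is_divisibility_sequence
    (a T : ℤ) (ha : a ≠ 0) (hT : T ≠ 0)
    (x : ℕ → ℤ)
    (hx0 : x 0 = 0) (hx1 : x 1 = a) (hx2 : x 2 = a) (hx3 : x 3 = a * (T + 1))
    (hrec : ∀ k : ℕ, x (k + 4) = T * x (k + 2) - x k) :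
    ∀ n m : ℕ, 0 < n → 0 < m → n ∣ m → x n ∣ x m := by
  have hd : ∀ k, a ∣ x k ∧ a ∣ x (k+1) ∧ a ∣ x (k+2) ∧ a ∣ x (k+3) := by
    intro k
    induction k with
    | zero => simp [hx0, hx1, hx2, hx3]
    | succ k ih =>
      obtain ⟨p, q, r, s⟩ := ih
      refine ⟨q, r, s, ?_⟩
      rw [show k + 1 + 3 = k + 4 by ring, hrec]
      exact dvd_sub (r.mul_left _) p
  choose u hu using fun k => (hd k).1
  have h0 : u 0 = 0 := by have := hu 0; simp_all
  have h1 : u 1 = 1 := by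
    apply mul_left_cancel₀ ha; rw [← hu, hx1, mul_one]
  have h2 : u 2 = 1 := by
    apply mul_left_cancel₀ ha; rw [← hu, hx2, mul_one]
  have h3 : u 3 = T + 1 := by
    apply mul_left_cancel₀ ha; rw [← hu, hx3]
  have hr : ∀ k, u (k+4) = T * u (k+2) - u k := by
    intro k
    apply mul_left_cancel₀ ha; rw [← hu, hrec, hu, hu]; ring
  have key : ∀ k, u (2*k+2) = u (2*k+1) - u (2*k) ∧
      u (2*k+3) = (T+2) * u (2*k+2) - u (2*k+1) := by
    intro k
    induction k with
    | zero => simp [h0, h1, h2, h3]; ring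
    | succ k ih =>
      obtain ⟨A, B⟩ := ih
      have r0 := hr (2*k)
      have r1 := hr (2*k+1)
      simp only [Nat.mul_add, Nat.mul_one, Nat.add_assoc, Nat.reduceAdd] at *
      constructor
      · linear_combination r0 - B - A
      · linear_combination r1 - (T+2) * r0 + (T+1) * B + (T+2) * A
  have add := lehmer_add (T+2) u h0 h1 (fun k => (key k).1) (fun k => (key k).2)
  have step : ∀ n m, ∃ c d : ℤ, u (n + 1 + m) = c * u (n+1) + d * u m := by
    intro n m
    obtain ⟨i, hi | hi⟩ := Nat.even_or_odd' n <;> obtain ⟨j, hj | hj⟩ := Nat.even_or_odd' m <;>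
      obtain ⟨A, B, C, D⟩ := add j i <;> subst hi <;> subst hj
    · exact ⟨u (2*j+1), -(T+2) * u (2*i), by
        rw [show 2*i+1+2*j = 2*(i+j)+1 by ring, A]; ring⟩
    · exact ⟨u (2*j+2), - u (2*i), by
        rw [show 2*i+1+(2*j+1) = 2*(i+j)+2 by ring, C]; ring⟩
    · exact ⟨u (2*j+1), - u (2*i+1), by
        rw [show 2*i+1+1+2*j = 2*(i+j)+2 by ring, B]; ring⟩
    · exact ⟨(T+2) * u (2*j+2), - u (2*i+1), by
        rw [show 2*i+1+1+(2*j+1) = 2*(i+j)+3 by ring, D]; ring⟩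
  rintro n m hn - ⟨k, rfl⟩
  rw [hu, hu (n*k)]
  apply mul_dvd_mul_left
  obtain ⟨n, rfl⟩ : ∃ p, n = p + 1 := ⟨n - 1, by omega⟩
  induction k with
  | zero => simp [h0]
  | succ k ih =>
    obtain ⟨c, d, h⟩ := step n ((n+1)*k)
    rw [show (n+1)*(k+1) = n+1+(n+1)*k by ring, h]
    exact dvd_add (dvd_mul_left _ _) (ih.mul_left _)
end

section
/- Let K be a quartic number field with a real quadratic subfield L, and let η ∈ K be an algebraic integer of degree 4 over ℚ with N_{K/ℚ}(η) = 1 such that ε := η² lies in L and is a unit of the ring of integers of L. Fix a nonzero β ∈ K, and let M′ = β·ℤ[η] be the ℤ-module with basis {β, βη, βη², βη³}. Then there exists a ℤ-basis W = {w₁, w₂, w₃, w₄} of M′ such that, writing β·η^k = x₁(k)w₁ + x₂(k)w₂ + x₃(k)w₃ + x₄(k)w₄ with x_i(k) ∈ ℤ, the sequence x₁ is a linear divisibility sequence. -/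
open Polynomial

/-- the Lehmer-type recurrence `u (n+4) = t u (n+2) - u n` -/
def lehRec (t a b c d : ℤ) : ℕ → ℤ
  | 0 => a
  | 1 => b
  | 2 => c
  | 3 => d
  | (n+4) => t * lehRec t a b c d (n+2) - lehRec t a b c d n

theorem lehRec_succ (t a b c d : ℤ) (n : ℕ) :
    lehRec t a b c d (n+4) = t * lehRec t a b c d (n+2) - lehRec t a b c d n := by
  rw [lehRec]

theorem four_step {P : ℕ → Prop} (h0 : P 0) (h1 : P 1) (h2 : P 2) (h3 : P 3)
    (h : ∀ n, P n → P (n+2) → P (n+4)) : ∀ n, P n := by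
  have : ∀ n, P n ∧ P (n+1) ∧ P (n+2) ∧ P (n+3) := by
    intro n
    induction n with
    | zero => exact ⟨h0, h1, h2, h3⟩
    | succ k ih => exact ⟨ih.2.1, ih.2.2.1, ih.2.2.2, h k ih.1 ih.2.2.1⟩
  exact fun n => (this n).1

theorem leh_closed {K : Type*} [Field K] (η δ : K) (t : ℤ) (hd : η * δ = 1)
    (ht : η ^ 2 + δ ^ 2 = t) (n : ℕ) :
    (lehRec t 0 1 1 (t+1) n : K) * ((η - δ) * (if Even n then η + δ else 1)) = η ^ n - δ ^ n := by
  induction n using four_step with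
  | h0 => simp [lehRec]
  | h1 => simp [lehRec]
  | h2 => simp [lehRec]; ring
  | h3 =>
    have : ¬ Even 3 := by decide
    simp only [lehRec, this, if_false]
    push_cast
    rw [← ht]; linear_combination (δ - η) * hd
  | h n i1 i2 =>
    have e2 : Even (n+2) ↔ Even n := by simp [Nat.even_add]
    have e4 : Even (n+4) ↔ Even n := by
      simp [Nat.even_add, show Even 4 by decide]
    rw [lehRec_succ]
    simp only [e2, e4] at *
    push_cast
    rw [sub_mul, mul_assoc, i1, i2, ← ht]
    linear_combination (η ^ n * (η*δ + 1) - δ ^ n * (η*δ+1)) * hd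

theorem leh_closed' {K : Type*} [Field K] (η δ : K) (t : ℤ) (hd : η * δ = 1)
    (ht : η ^ 2 + δ ^ 2 = t) (n : ℕ) :
    (lehRec t 2 1 t (t-1) n : K) * (if Even n then 1 else η + δ) = η ^ n + δ ^ n := by
  induction n using four_step with
  | h0 => simp [lehRec]; norm_num
  | h1 => simp [lehRec]
  | h2 => simp [lehRec, ht]
  | h3 =>
    have : ¬ Even 3 := by decide
    simp only [lehRec, this, if_false]
    push_cast
    rw [← ht]; linear_combination (δ + η) * hd
  | h n i1 i2 =>
    have e2 : Even (n+2) ↔ Even n := by simp [Nat.even_add]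
    have e4 : Even (n+4) ↔ Even n := by
      simp [Nat.even_add, show Even 4 by decide]
    rw [lehRec_succ]
    simp only [e2, e4] at *
    push_cast
    rw [sub_mul, mul_assoc, i1, i2, ← ht]
    linear_combination (η ^ n * (η*δ + 1) + δ ^ n * (η*δ+1)) * hd

theorem leh_dvd {K : Type*} [Field K] [CharZero K] (η δ : K) (t : ℤ) (hd : η * δ = 1)
    (ht : η ^ 2 + δ ^ 2 = t) (h1 : η - δ ≠ 0) (h2 : η + δ ≠ 0) (n k : ℕ) :
    lehRec t 0 1 1 (t+1) n ∣ lehRec t 0 1 1 (t+1) (n * k) := by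
  set u := lehRec t 0 1 1 (t+1) with hu
  set v := lehRec t 2 1 t (t-1) with hv
  have U := leh_closed η δ t hd ht
  have V := leh_closed' η δ t hd ht
  rw [← hu] at U
  rw [← hv] at V
  have hnd : η ^ n * δ ^ n = 1 := by rw [← mul_pow, hd, one_pow]
  have cne : ∀ m : ℕ, (η - δ) * (if Even m then η + δ else 1) ≠ 0 := by
    intro m; split_ifs
    · exact mul_ne_zero h1 h2
    · simpa using h1
  have V2 : (v (2*n) : K) = (η^n)^2 + (δ^n)^2 := by
    have := V (2*n)
    simp only [even_two_mul, if_true, mul_one] at this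
    rw [this]; ring
  induction k using four_step with
  | h0 => simp [hu, lehRec]
  | h1 => simp
  | h2 =>
    refine ⟨v n, ?_⟩
    have : (u (n*2) : K) = u n * v n := by
      apply mul_right_cancel₀ (cne (n*2))
      rw [U, pow_mul, pow_mul, sq_sub_sq, ← U n, ← V n]
      by_cases h : Even n <;> simp [h] <;> ring
    exact_mod_cast this
  | h3 =>
    refine ⟨v (2*n) + 1, ?_⟩
    have e : Even (n*3) ↔ Even n := by simp [Nat.even_mul, show ¬ Even 3 by decide]
    have : (u (n*3) : K) = u n * (v (2*n) + 1) := by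
      apply mul_right_cancel₀ (cne (n*3))
      rw [U, V2]
      simp only [e]
      rw [mul_right_comm, U n, pow_mul, pow_mul]
      linear_combination (η^n-δ^n) * hnd
    exact_mod_cast this
  | h k i1 i2 =>
    have : (u (n*(k+4)) : K) = v (2*n) * u (n*(k+2)) - u (n*k) := by
      have e2 : Even (n*(k+2)) ↔ Even (n*k) := by simp [Nat.even_mul, Nat.even_add]
      have e4 : Even (n*(k+4)) ↔ Even (n*k) := by
        simp [Nat.even_mul, Nat.even_add, show Even 4 by decide]
      have U2 := U (n*(k+2))
      have U4 := U (n*(k+4))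
      have U0 := U (n*k)
      apply mul_right_cancel₀ (cne (n*k))
      simp only [e2, e4] at U2 U4
      rw [U4, sub_mul, mul_assoc, U2, U0, V2]
      simp only [pow_mul, pow_add]
      linear_combination (- (η^n)^k * (η^n*δ^n + 1) + (δ^n)^k * (η^n*δ^n+1)) * hnd
    have h' : u (n*(k+4)) = v (2*n) * u (n*(k+2)) - u (n*k) := by exact_mod_cast this
    rw [h']
    exact dvd_sub (Dvd.dvd.mul_left i2 _) i1

theorem quartic_rel
    (K : Type*) [Field K] [NumberField K] (hK4 : Module.finrank ℚ K = 4)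
    (L : IntermediateField ℚ K) (hL2 : Module.finrank ℚ L = 2)
    (η : K) (hηint : IsIntegral ℤ η) (hηdeg : (minpoly ℚ η).natDegree = 4)
    (hηnorm : Algebra.norm ℚ η = 1)
    (hεL : η ^ 2 ∈ L) (hεint : IsIntegral ℤ (η ^ 2)) :
    ∃ t : ℤ, η ^ 4 = t * η ^ 2 - 1 := by
  have hQ : IsIntegral ℚ η := Algebra.IsIntegral.isIntegral η
  have hQ2 : IsIntegral ℚ (η^2) := Algebra.IsIntegral.isIntegral _
  have hle : (minpoly ℚ (η^2)).natDegree ≤ 2 := by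
    have h := minpoly.natDegree_le (A := ℚ) (⟨η^2, hεL⟩ : L)
    rw [hL2] at h
    have h3 : minpoly ℚ (algebraMap L K ⟨η^2, hεL⟩) = minpoly ℚ (⟨η^2, hεL⟩ : L) :=
      minpoly.algebraMap_eq (algebraMap L K).injective _
    have h4 : algebraMap L K ⟨η^2, hεL⟩ = η^2 := rfl
    rw [h4] at h3
    rwa [h3]
  have hmon := minpoly.monic hεint
  have hmap := minpoly.isIntegrallyClosed_eq_field_fractions' ℚ hεint
  have hmonQ := minpoly.monic hQ2
  set q := minpoly ℤ (η^2) with hq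
  have hx2m : (X^2 : ℚ[X]).Monic := monic_X_pow 2
  have hcm : ((minpoly ℚ (η^2)).comp (X^2)).Monic := hmonQ.comp hx2m (by simp)
  have hroot : aeval η ((minpoly ℚ (η^2)).comp (X^2)) = 0 := by
    rw [aeval_comp]; simp [minpoly.aeval]
  have hdvd := minpoly.dvd ℚ η hroot
  have hdeg := natDegree_le_of_dvd hdvd hcm.ne_zero
  rw [natDegree_comp, natDegree_X_pow, hηdeg] at hdeg
  have hdeg2 : (minpoly ℚ (η^2)).natDegree = 2 := by omega
  have heq : minpoly ℚ η = (minpoly ℚ (η^2)).comp (X^2) := by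
    refine (eq_of_monic_of_dvd_of_natDegree_le (minpoly.monic hQ) hcm hdvd ?_).symm
    rw [natDegree_comp, natDegree_X_pow, hηdeg, hdeg2]
  have hqd : q.natDegree = 2 := by
    rw [← hdeg2, hmap, hmon.natDegree_map]
  -- norm
  have hchar : minpoly ℚ η = (Algebra.lmul ℚ K η).charpoly := by
    refine (eq_of_monic_of_dvd_of_natDegree_le (minpoly.monic hQ)
      (LinearMap.charpoly_monic _) (minpoly.dvd ℚ η ?_) ?_).symm
    · have := LinearMap.aeval_self_charpoly (Algebra.lmul ℚ K η)
      rw [aeval_algHom_apply] at this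
      have h1 := LinearMap.congr_fun this 1
      simpa using h1
    · rw [LinearMap.charpoly_natDegree, hK4, hηdeg]
  have hc0 : (minpoly ℚ η).coeff 0 = 1 := by
    rw [hchar, ← hηnorm, Algebra.norm_apply, LinearMap.det_eq_sign_charpoly_coeff, hK4]
    simp
    norm_num
  have hq0 : q.coeff 0 = 1 := by
    rw [heq, hmap] at hc0
    rw [coeff_zero_eq_eval_zero, eval_comp] at hc0
    simp only [eval_pow, eval_X, ne_eq, OfNat.ofNat_ne_zero, not_false_eq_true, zero_pow] at hc0
    rw [← coeff_zero_eq_eval_zero, coeff_map, eq_intCast] at hc0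
    exact_mod_cast hc0
  have hq2 : q.coeff 2 = 1 := by
    have := hmon.coeff_natDegree
    rwa [hqd] at this
  refine ⟨-q.coeff 1, ?_⟩
  have ha : aeval (η^2) q = 0 := minpoly.aeval ℤ (η^2)
  rw [aeval_eq_sum_range, hqd] at ha
  simp only [Finset.sum_range_succ, Finset.range_zero, Finset.sum_empty, hq0, hq2] at ha
  simp at ha
  push_cast
  linear_combination ha

/-- Theorem 1. Let `K` be a quartic field with a real quadratic
subfield `L`, and `η ∈ K` an algebraic integer of degree 4 and norm 1 with
`ε = η²` a unit of the ring of integers of `L`. For any nonzero `β ∈ K` there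
is a ℤ-basis `W` of `M′ = β·ℤ[η]` making the first coordinate sequence of
`β·η^k` a linear divisibility sequence. -/
theorem quartic_coordinate_LDS
    (K : Type*) [Field K] [NumberField K] (hK4 : Module.finrank ℚ K = 4)
    (L : IntermediateField ℚ K) (hL2 : Module.finrank ℚ L = 2) (φ : L →+* ℝ)
    (η : K) (hηint : IsIntegral ℤ η) (hηdeg : (minpoly ℚ η).natDegree = 4)
    (hηnorm : Algebra.norm ℚ η = 1)
    (hεL : η ^ 2 ∈ L)
    (hεint : IsIntegral ℤ (η ^ 2)) (hεinv : IsIntegral ℤ (η ^ 2)⁻¹)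
    (β : K) (hβ : β ≠ 0) :
    ∃ w : Fin 4 → K,
      Submodule.span ℤ (Set.range w)
        = Submodule.span ℤ (Set.range fun i : Fin 4 => β * η ^ (i : ℕ)) ∧
      LinearIndependent ℤ w ∧
      ∃ x : Fin 4 → ℕ → ℤ,
        (∀ k : ℕ, β * η ^ k = ∑ i : Fin 4, (x i k : K) * w i) ∧
        (∀ n m : ℕ, 0 < n → 0 < m → n ∣ m → x 0 n ∣ x 0 m) := by
  obtain ⟨t, ht⟩ := quartic_rel K hK4 L hL2 η hηint hηdeg hηnorm hεL hεint
  have hli4 : ∀ a b c d : ℚ, (a : K) + b * η + c * η^2 + d * η^3 = 0 →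
      a = 0 ∧ b = 0 ∧ c = 0 ∧ d = 0 := by
    have h := linearIndependent_pow (K := ℚ) η
    rw [hηdeg] at h
    rw [Fintype.linearIndependent_iff] at h
    intro a b c d he
    have h' := h ![a, b, c, d] (by
      simp [Fin.sum_univ_four, Algebra.smul_def]
      linear_combination he)
    exact ⟨h' 0, h' 1, h' 2, h' 3⟩
  have hη0 : η ≠ 0 := by
    intro h
    have := hli4 0 1 0 0 (by simp [h])
    simp at this
  have hd : η * η⁻¹ = 1 := mul_inv_cancel₀ hη0
  have ht' : η ^ 2 + η⁻¹ ^ 2 = t := by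
    field_simp
    linear_combination ht
  have h1 : η - η⁻¹ ≠ 0 := by
    intro h
    have := hli4 (-1) 0 1 0 (by
      push_cast
      linear_combination η * h + hd)
    simp at this
  have h2 : η + η⁻¹ ≠ 0 := by
    intro h
    have := hli4 1 0 1 0 (by
      push_cast
      linear_combination η * h - hd)
    simp at this
  have w0 : β * η ∈ Submodule.span ℤ (Set.range fun i : Fin 4 => β * η ^ (i : ℕ)) :=
    Submodule.subset_span ⟨1, by simp⟩
  have w1 : β ∈ Submodule.span ℤ (Set.range fun i : Fin 4 => β * η ^ (i : ℕ)) :=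
    Submodule.subset_span ⟨0, by simp⟩
  have w2 : β * η ^ 2 ∈ Submodule.span ℤ (Set.range fun i : Fin 4 => β * η ^ (i : ℕ)) :=
    Submodule.subset_span ⟨2, by simp⟩
  have w3 : β * η ^ 3 ∈ Submodule.span ℤ (Set.range fun i : Fin 4 => β * η ^ (i : ℕ)) :=
    Submodule.subset_span ⟨3, by simp⟩
  set w : Fin 4 → K := ![β * η, β, β * η ^ 2 - β * η, β * η ^ 3 - (t + 1 : ℤ) • (β * η)] with hw
  have v : ∀ i, w i ∈ Submodule.span ℤ (Set.range w) := fun i => Submodule.subset_span ⟨i, rfl⟩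
  refine ⟨w, le_antisymm ?_ ?_, ?_, ![lehRec t 0 1 1 (t+1), lehRec t 1 0 0 0,
      lehRec t 0 0 1 0, lehRec t 0 0 0 1], ?_, ?_⟩
  · rw [Submodule.span_le]
    rintro _ ⟨i, rfl⟩
    fin_cases i
    · exact w0
    · exact w1
    · exact sub_mem w2 w0
    · exact sub_mem w3 (Submodule.smul_mem _ _ w0)
  · rw [Submodule.span_le]
    rintro _ ⟨i, rfl⟩
    fin_cases i
    · simpa [hw] using v 1
    · simpa [hw] using v 0
    · have := add_mem (v 2) (v 0)
      simpa [hw] using this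
    · have := add_mem (v 3) (Submodule.smul_mem _ (t+1) (v 0))
      simpa [hw] using this
  · rw [Fintype.linearIndependent_iff]
    intro g hg
    simp only [Fin.sum_univ_four, hw, zsmul_eq_mul] at hg
    simp at hg
    have := hli4 (g 1) (g 0 - g 2 - (t+1) * g 3) (g 2) (g 3) (by
      apply mul_left_cancel₀ hβ
      push_cast
      linear_combination hg)
    obtain ⟨e1, e0, e2, e3⟩ := this
    rw [e2, e3] at e0
    simp at e0 e1 e2 e3
    intro i
    fin_cases i
    · exact e0
    · exact e1
    · exact e2
    · exact e3
  · intro k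
    induction k using four_step with
    | h0 => simp [Fin.sum_univ_four, hw, lehRec]
    | h1 => simp [Fin.sum_univ_four, hw, lehRec]
    | h2 => simp [Fin.sum_univ_four, hw, lehRec]
    | h3 => simp [Fin.sum_univ_four, hw, lehRec]
    | h n i1 i2 =>
      have e : β * η ^ (n+4) = t * (β * η ^ (n+2)) - β * η ^ n := by
        linear_combination β * η ^ n * ht
      rw [e, i1, i2]
      simp only [Fin.sum_univ_four]
      simp [lehRec_succ]
      ring
  · rintro n m - - ⟨k, rfl⟩
    exact leh_dvd η η⁻¹ t hd ht' h1 h2 n k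
end

section
/- Let m be a positive integer such that neither m nor m+1 is a perfect square, let K = ℚ(√m, √(m+1)), and let M = ℤ[√m, √(m+1)] be the ℤ-module with basis {1, √m, √(m+1), √(m(m+1))}. Then η = √m + √(m+1) satisfies N_{K/ℚ}(η) = 1 and η·M ⊆ M (so η ∈ 𝒰_M⁺), η² = 2m+1+2√(m(m+1)) is a unit in the quadratic subfield ℚ(√(m(m+1))) of K, and there exists a ℤ-basis W = {w₁, w₂, w₃, w₄} of M such that, writing η^k = x₁(k)w₁ + x₂(k)w₂ + x₃(k)w₃ + x₄(k)w₄ with x_i(k) ∈ ℤ, the sequence x₁ is a linear divisibility sequence. -/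
open IntermediateField

theorem rat_nonsq (n : ℕ) (h : ¬ IsSquare n) (q : ℚ) : q ^ 2 ≠ (n : ℚ) := by
  intro hq
  apply h
  rw [← Rat.isSquare_natCast_iff]
  exact ⟨q, by rw [← hq]; ring⟩

theorem nonsq_mul (m : ℕ) (hm : 0 < m) : ¬ IsSquare (m * (m + 1)) := by
  rintro ⟨r, hr⟩
  have h1 : m < r := by nlinarith
  have h2 : r < m + 1 := by nlinarith
  omega

theorem li_rat (m : ℕ) (hm : 0 < m) (hm1 : ¬ IsSquare m) (hm2 : ¬ IsSquare (m + 1))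
    {K : Type*} [Field K] [CharZero K]
    (a b : K) (ha : a ^ 2 = (m : K)) (hb : b ^ 2 = (m : K) + 1)
    (p q r s : ℚ) (h : (p : K) + q * a + r * b + s * (a * b) = 0) :
    p = 0 ∧ q = 0 ∧ r = 0 ∧ s = 0 := by
  have one : ∀ u v : ℚ, (u : K) + v * a = 0 → u = 0 ∧ v = 0 := by
    intro u v huv
    have h2 : u ^ 2 = v ^ 2 * m := by
      have : (u : K) ^ 2 = v ^ 2 * m := by
        rw [← ha]; linear_combination (u - v * a : K) * huv
      exact_mod_cast this
    have hv : v = 0 := by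
      by_contra hv
      apply rat_nonsq m hm1 (u / v)
      rw [div_pow, h2]; field_simp
    subst hv
    simpa using h2
  have hN : r ^ 2 - m * s ^ 2 = 0 := by
    by_contra hN
    have hbN : ((r ^ 2 - m * s ^ 2 : ℚ) : K) * b
        = ((m * s * q - p * r : ℚ) : K) + ((p * s - q * r : ℚ) : K) * a := by
      push_cast
      rw [← ha]; linear_combination (r - s * a : K) * h
    obtain ⟨u, v, huv⟩ : ∃ u v : ℚ, b = (u : K) + v * a := by
      refine ⟨(m * s * q - p * r) / (r ^ 2 - m * s ^ 2),
        (p * s - q * r) / (r ^ 2 - m * s ^ 2), ?_⟩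
      have hN' : ((r ^ 2 - m * s ^ 2 : ℚ) : K) ≠ 0 := by exact_mod_cast hN
      apply mul_left_cancel₀ hN'
      rw [hbN, Rat.cast_div, Rat.cast_div]
      field_simp
    have h3 := one (u ^ 2 + m * v ^ 2 - (m + 1)) (2 * u * v) (by
      push_cast
      rw [← hb, huv, ← ha]; ring)
    obtain ⟨h3, h4⟩ := h3
    have h5 : u = 0 ∨ v = 0 := by simpa using h4
    rcases h5 with rfl | rfl
    · apply rat_nonsq _ (nonsq_mul m hm) (m * v)
      push_cast
      linear_combination (m : ℚ) * h3
    · apply rat_nonsq _ hm2 u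
      push_cast
      linear_combination h3
  have hs : s = 0 := by
    by_contra hs
    apply rat_nonsq m hm1 (r / s)
    rw [div_pow]; field_simp; linear_combination hN
  subst hs
  have hr : r = 0 := by simpa using hN
  subst hr
  have := one p q (by simpa using h)
  simp [this]

theorem span_form (m : ℕ) {K : Type*} [Field K] [NumberField K]
    (a b : K) (ha : a ^ 2 = (m : K)) (hb : b ^ 2 = (m : K) + 1)
    (hgen : IntermediateField.adjoin ℚ {a, b} = (⊤ : IntermediateField ℚ K)) (z : K) :
    ∃ p q r s : ℚ, z = (p : K) + q * a + r * b + s * (a * b) := by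
  have hz : z ∈ (IntermediateField.adjoin ℚ {a, b}).toSubalgebra := by rw [hgen]; trivial
  rw [IntermediateField.adjoin_toSubalgebra_of_isAlgebraic (fun x _ => Algebra.IsAlgebraic.isAlgebraic x)] at hz
  induction hz using Algebra.adjoin_induction with
  | mem x hx =>
    rcases hx with rfl | rfl
    · exact ⟨0, 1, 0, 0, by simp⟩
    · exact ⟨0, 0, 1, 0, by simp⟩
  | algebraMap r => exact ⟨r, 0, 0, 0, by simp⟩
  | add x y _ _ hx hy =>
    obtain ⟨p, q, r, s, rfl⟩ := hx
    obtain ⟨p', q', r', s', rfl⟩ := hy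
    exact ⟨p + p', q + q', r + r', s + s', by push_cast; ring⟩
  | mul x y _ _ hx hy =>
    obtain ⟨p, q, r, s, rfl⟩ := hx
    obtain ⟨p', q', r', s', rfl⟩ := hy
    refine ⟨p * p' + q * q' * m + r * r' * (m + 1) + s * s' * m * (m + 1),
      p * q' + q * p' + (r * s' + s * r') * (m + 1),
      p * r' + r * p' + (q * s' + s * q') * m,
      p * s' + s * p' + q * r' + r * q', ?_⟩
    push_cast
    rw [← hb, ← ha]; ring

theorem norm_eta (m : ℕ) (hm : 0 < m) (hm1 : ¬ IsSquare m) (hm2 : ¬ IsSquare (m + 1))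
    {K : Type*} [Field K] [NumberField K]
    (a b : K) (ha : a ^ 2 = (m : K)) (hb : b ^ 2 = (m : K) + 1)
    (hgen : IntermediateField.adjoin ℚ {a, b} = (⊤ : IntermediateField ℚ K)) :
    Algebra.norm ℚ (a + b) = 1 := by
  have hli : LinearIndependent ℚ ![1, a, b, a * b] := by
    rw [Fintype.linearIndependent_iff]
    intro g hg
    simp only [Fin.sum_univ_four, Rat.smul_def] at hg
    have := li_rat m hm hm1 hm2 a b ha hb (g 0) (g 1) (g 2) (g 3) (by simpa using hg)
    intro i
    fin_cases i <;> simp [this]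
  have hsp : ⊤ ≤ Submodule.span ℚ (Set.range ![1, a, b, a * b]) := by
    intro z _
    obtain ⟨p, q, r, s, rfl⟩ := span_form m a b ha hb hgen z
    rw [Submodule.mem_span_range_iff_exists_fun]
    refine ⟨![p, q, r, s], ?_⟩
    simp [Fin.sum_univ_four, Rat.smul_def]
  let B := Module.Basis.mk hli hsp
  rw [Algebra.norm_eq_matrix_det B]
  have : Algebra.leftMulMatrix B (a + b) =
      !![0, (m : ℚ), m + 1, 0; 1, 0, 0, m + 1; 1, 0, 0, m; 0, 1, 1, 0] := by
    have key : ∀ j, (a + b) * B j = ∑ i,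
      (!![0, (m : ℚ), m + 1, 0; 1, 0, 0, m + 1; 1, 0, 0, m; 0, 1, 1, 0] i j) • B i := by
      intro j
      fin_cases j <;> simp [B, Fin.sum_univ_four, Rat.smul_def] <;> (try rw [← ha]) <;> grind
    ext i j
    rw [Algebra.leftMulMatrix_eq_repr_mul, key, Module.Basis.repr_sum_self]
  rw [this]
  simp [Matrix.det_succ_row_zero, Fin.sum_univ_succ, Fin.succAbove]

theorem quad_rank (m : ℕ) (hm : 0 < m) 
    {K : Type*} [Field K] [NumberField K]
    (a b : K) (ha : a ^ 2 = (m : K)) (hb : b ^ 2 = (m : K) + 1) :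
    Module.finrank ℚ (ℚ⟮a * b⟯ : IntermediateField ℚ K) = 2 := by
  have hmon : (Polynomial.X ^ 2 - Polynomial.C (m * (m + 1) : ℚ)).Monic :=
    Polynomial.monic_X_pow_sub_C _ (by norm_num)
  have hirr : Irreducible (Polynomial.X ^ 2 - Polynomial.C (m * (m + 1) : ℚ)) := by
    apply X_pow_sub_C_irreducible_of_prime Nat.prime_two
    intro q hq
    apply rat_nonsq _ (nonsq_mul m hm) q
    push_cast; exact hq
  rw [IntermediateField.adjoin.finrank (IsIntegral.of_finite ℚ _),
    ← minpoly.eq_of_irreducible_of_monic hirr _ hmon]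
  · exact Polynomial.natDegree_X_pow_sub_C
  · simp [mul_pow, ha, hb]

theorem pow_form (m : ℕ) {K : Type*} [Field K]
    (a b : K) (ha : a ^ 2 = (m : K)) (hb : b ^ 2 = (m : K) + 1) (k : ℕ) :
    ∃ p q r s : ℤ, (a + b) ^ k = (p : K) + q * a + r * b + s * (a * b) ∧
      (Even k → q = 0 ∧ r = 0) ∧ (¬ Even k → p = 0 ∧ s = 0) := by
  induction k with
  | zero => exact ⟨1, 0, 0, 0, by simp, by simp, by simp⟩
  | succ k ih =>
    obtain ⟨p, q, r, s, h, h1, h2⟩ := ih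
    refine ⟨q * m + r * (m + 1), p + s * (m + 1), p + s * m, q + r, ?_, ?_, ?_⟩
    · rw [pow_succ, h]; push_cast; rw [← hb, ← ha]; ring
    · intro hk; have := h2 (by grind); simp [this]
    · intro hk; have := h1 (by grind); simp [this]

theorem odd_pow (m : ℕ) {K : Type*} [Field K]
    (a b : K) (ha : a ^ 2 = (m : K)) (hb : b ^ 2 = (m : K) + 1) (x y : ℤ) (j : ℕ) :
    ∃ u v : ℤ, ((x : K) * a + y * b) ^ (2 * j + 1) = ((x * u : ℤ) : K) * a + v * b := by
  induction j with
  | zero => exact ⟨1, y, by simp⟩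
  | succ j ih =>
    obtain ⟨u, v, h⟩ := ih
    refine ⟨(x ^ 2 * m + y ^ 2 * (m + 1)) * u + 2 * y * v * (m + 1),
      (x ^ 2 * m + y ^ 2 * (m + 1)) * v + 2 * x * y * x * u * m, ?_⟩
    rw [show 2 * (j + 1) + 1 = (2 * j + 1) + 2 by ring, pow_add, h]
    push_cast; rw [← hb, ← ha]; ring

/-- Theorem 2. For `K = ℚ(√m, √(m+1))` with `m, m+1` nonsquare and
`M = ℤ[√m, √(m+1)]` (with ℤ-basis `{1, √m, √(m+1), √(m(m+1))}`), the element
`η = √m + √(m+1)` has norm 1 and satisfies `η·M ⊆ M` (so `η ∈ 𝒰_M⁺`),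
`η² = 2m+1+2√(m(m+1))` is a unit in the quadratic subfield `ℚ(√(m(m+1)))`, and
there is a ℤ-basis `W` of `M` making the first coordinate sequence of `η^k` a
linear divisibility sequence. -/
theorem sqrt_m_sqrt_m_add_one_LDS
    (m : ℕ) (hm : 0 < m) (hm1 : ¬ IsSquare m) (hm2 : ¬ IsSquare (m + 1))
    (K : Type*) [Field K] [NumberField K]
    (a b : K) (ha : a ^ 2 = (m : K)) (hb : b ^ 2 = (m : K) + 1)
    (hgen : IntermediateField.adjoin ℚ {a, b} = (⊤ : IntermediateField ℚ K))
    (M : Submodule ℤ K)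
    (hM : M = Submodule.span ℤ ({1, a, b, a * b} : Set K))
    (η : K) (hη : η = a + b) :
    Algebra.norm ℚ η = 1 ∧
    (∀ z ∈ M, η * z ∈ M) ∧
    η ^ 2 = 2 * (m : K) + 1 + 2 * (a * b) ∧
    η ^ 2 ∈ (ℚ⟮a * b⟯ : IntermediateField ℚ K) ∧
    Module.finrank ℚ (ℚ⟮a * b⟯ : IntermediateField ℚ K) = 2 ∧
    IsIntegral ℤ (η ^ 2) ∧ IsIntegral ℤ (η ^ 2)⁻¹ ∧
    ∃ w : Fin 4 → K,
      Submodule.span ℤ (Set.range w) = M ∧ LinearIndependent ℤ w ∧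
      ∃ x : Fin 4 → ℕ → ℤ,
        (∀ k : ℕ, η ^ k = ∑ i : Fin 4, (x i k : K) * w i) ∧
        (∀ n' m' : ℕ, 0 < n' → 0 < m' → n' ∣ m' → x 0 n' ∣ x 0 m') := by
  have hli := fun p q r s => li_rat m hm hm1 hm2 a b ha hb p q r s
  have hηη : η ^ 2 = 2 * (m : K) + 1 + 2 * (a * b) := by
    rw [hη]; linear_combination ha + hb
  have hia : IsIntegral ℤ a := by
    apply IsIntegral.of_pow (n := 2) (by norm_num)
    rw [ha]; exact_mod_cast (isIntegral_algebraMap (R := ℤ) (A := K) (x := (m : ℤ)))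
  have hib : IsIntegral ℤ b := by
    apply IsIntegral.of_pow (n := 2) (by norm_num)
    rw [hb]; exact_mod_cast (isIntegral_algebraMap (R := ℤ) (A := K) (x := (m + 1 : ℤ)))
  have hinv : (η ^ 2)⁻¹ = (b - a) ^ 2 := by
    apply inv_eq_of_mul_eq_one_right
    have : (a + b) * (b - a) = 1 := by linear_combination hb - ha
    rw [hη, ← mul_pow, this, one_pow]
  refine ⟨hη ▸ norm_eta m hm hm1 hm2 a b ha hb hgen, ?_, hηη, ?_,
    quad_rank m hm a b ha hb, ?_, ?_, ?_⟩
  · intro z hz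
    subst hM
    have m1 : (1 : K) ∈ Submodule.span ℤ ({1, a, b, a * b} : Set K) :=
      Submodule.subset_span (by simp)
    have m2 : a ∈ Submodule.span ℤ ({1, a, b, a * b} : Set K) :=
      Submodule.subset_span (by simp)
    have m3 : b ∈ Submodule.span ℤ ({1, a, b, a * b} : Set K) :=
      Submodule.subset_span (by simp)
    have m4 : a * b ∈ Submodule.span ℤ ({1, a, b, a * b} : Set K) :=
      Submodule.subset_span (by simp)
    induction hz using Submodule.span_induction with
    | mem x hx =>
      rcases hx with rfl | rfl | rfl | rfl
      · rw [hη, mul_one]; exact add_mem m2 m3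
      · have : η * x = (m : ℤ) • (1 : K) + x * b := by
          rw [hη]; simp; linear_combination ha
        rw [this]; exact add_mem (Submodule.smul_mem _ _ m1) m4
      · have : η * x = (m + 1 : ℤ) • (1 : K) + a * x := by
          rw [hη]; simp; linear_combination hb
        rw [this]; exact add_mem (Submodule.smul_mem _ _ m1) m4
      · have : η * (a * b) = (m : ℤ) • b + (m + 1 : ℤ) • a := by
          rw [hη]; simp; linear_combination b * ha + a * hb
        rw [this]; exact add_mem (Submodule.smul_mem _ _ m3) (Submodule.smul_mem _ _ m2)
    | zero => simp
    | add x y _ _ hx hy => rw [mul_add]; exact add_mem hx hy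
    | smul c x _ hx => rw [mul_smul_comm]; exact Submodule.smul_mem _ _ hx
  · rw [hηη]
    have h := IntermediateField.mem_adjoin_simple_self ℚ (a * b)
    have h2 : (2 : K) ∈ (ℚ⟮a * b⟯ : IntermediateField ℚ K) := ofNat_mem _ 2
    exact add_mem (add_mem (mul_mem h2 (_root_.natCast_mem _ m)) (one_mem _)) (mul_mem h2 h)
  · rw [hη]; exact (hia.add hib).pow 2
  · rw [hinv]; exact (hib.sub hia).pow 2
  · choose p q r s hpow hev hod using pow_form m a b ha hb
    refine ⟨![a, 1, b, a * b], ?_, ?_, ![q, p, r, s], ?_, ?_⟩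
    · rw [hM]; congr 1; ext z; simp; grind
    · rw [Fintype.linearIndependent_iff]
      intro g hg
      simp only [Fin.sum_univ_four, zsmul_eq_mul] at hg
      have := hli (g 1) (g 0) (g 2) (g 3) (by simp at hg ⊢; linear_combination hg)
      intro i
      obtain ⟨h1, h2, h3, h4⟩ := this
      fin_cases i
      · exact_mod_cast h2
      · exact_mod_cast h1
      · exact_mod_cast h3
      · exact_mod_cast h4
    · intro k
      rw [hη, hpow k]; simp [Fin.sum_univ_four]; ring
    · rintro n' m' hn hm' ⟨c, rfl⟩
      show q n' ∣ q (n' * c)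
      by_cases hE : Even (n' * c)
      · rw [(hev _ hE).1]; exact dvd_zero _
      · have hc : ¬ Even c := fun h => hE (h.mul_left _)
        have hn2 : ¬ Even n' := fun h => hE (h.mul_right _)
        obtain ⟨j, rfl⟩ := Nat.not_even_iff_odd.mp hc
        obtain ⟨u, v, huv⟩ := odd_pow m a b ha hb (q n') (r n') j
        have e1 := hpow (n' * (2 * j + 1))
        rw [pow_mul, hpow n', (hod _ hn2).1, (hod _ hn2).2, (hod _ hE).1, (hod _ hE).2] at e1
        simp only [Int.cast_zero, zero_add, zero_mul, add_zero] at e1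
        rw [huv] at e1
        have := (hli 0 ((q (n' * (2 * j + 1)) : ℚ) - (q n' * u : ℤ))
          ((r (n' * (2 * j + 1)) : ℚ) - v) 0 (by
            push_cast at e1 ⊢; linear_combination -e1)).2.1
        refine ⟨u, ?_⟩
        have h := sub_eq_zero.mp this
        exact_mod_cast h
end

section
/- Let K be a quartic number field with a real quadratic subfield L, and let η ∈ K be an algebraic integer of degree 4 over ℚ with N_{K/ℚ}(η) = 1 such that ε := η² lies in L and is a unit of the ring of integers of L. Let T = Tr_{L/ℚ}(ε), fix a nonzero β ∈ K, and let u be the Lucas sequence with parameters (T, 1). Then there exists a ℤ-basis W = {w₁, w₂, w₃, w₄} of the module M′ = β·ℤ[η] such that, writing β·η^k = x₁(k)w₁ + x₂(k)w₂ + x₃(k)w₃ + x₄(k)w₄ with x_i(k) ∈ ℤ, for every integer n ≥ 1 we have: x₁(2n) = u(n) and x₁(2n+1) = u(n+1) + u(n); x₂(2n) = 0 and x₂(2n+1) = u(n); x₃(2n) = −u(n−1) and x₃(2n+1) = 0; x₄(2n) = 0 and x₄(2n+1) = −u(n−1). -/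
open Polynomial

/-- Corollary 2. With `K`, `L`, `η`, `ε = η²`, `β` as in Theorem 1
and `T = Tr_{L/ℚ}(ε)`, there is a ℤ-basis `W` of `M′ = β·ℤ[η]` so that for
every `n ≥ 1` the coordinate sequences of `β·η^k` are given by the stated
explicit formulas in terms of the Lucas sequence `u` with parameters
`(T, 1)`. -/
theorem coordinate_sequences_explicit_formulas
    (K : Type*) [Field K] [NumberField K] (hK4 : Module.finrank ℚ K = 4)
    (L : IntermediateField ℚ K) (hL2 : Module.finrank ℚ L = 2) (φ : L →+* ℝ)
    (η : K) (hηint : IsIntegral ℤ η) (hηdeg : (minpoly ℚ η).natDegree = 4)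
    (hηnorm : Algebra.norm ℚ η = 1)
    (ε : L) (hε : (ε : K) = η ^ 2)
    (hεint : IsIntegral ℤ (ε : K)) (hεinv : IsIntegral ℤ ((ε : K))⁻¹)
    (T : ℤ) (hT : (T : ℚ) = Algebra.trace ℚ L ε)
    (u : ℕ → ℤ) (hu0 : u 0 = 0) (hu1 : u 1 = 1)
    (hurec : ∀ k : ℕ, u (k + 2) = T * u (k + 1) - 1 * u k)
    (β : K) (hβ : β ≠ 0) :
    ∃ w : Fin 4 → K,
      Submodule.span ℤ (Set.range w)
        = Submodule.span ℤ (Set.range fun i : Fin 4 => β * η ^ (i : ℕ)) ∧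
      LinearIndependent ℤ w ∧
      ∃ x : Fin 4 → ℕ → ℤ,
        (∀ k : ℕ, β * η ^ k = ∑ i : Fin 4, (x i k : K) * w i) ∧
        ∀ n : ℕ, 1 ≤ n →
          x 0 (2 * n) = u n ∧ x 0 (2 * n + 1) = u (n + 1) + u n ∧
          x 1 (2 * n) = 0 ∧ x 1 (2 * n + 1) = u n ∧
          x 2 (2 * n) = - u (n - 1) ∧ x 2 (2 * n + 1) = 0 ∧
          x 3 (2 * n) = 0 ∧ x 3 (2 * n + 1) = - u (n - 1) := by
  have hq : η ^ 4 = (T : K) * η ^ 2 - 1 := by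
    let b : Module.Basis (Fin 2) ℚ L := Module.finBasisOfFinrankEq ℚ L hL2
    set A := Algebra.leftMulMatrix b ε with hA
    have hAtr : A.trace = T := by
      rw [hT, Algebra.trace_eq_matrix_trace b]
    have hch := Matrix.aeval_self_charpoly A
    rw [Matrix.charpoly_fin_two, hAtr] at hch
    set d := A.det with hd
    have h1 : Polynomial.aeval ε (X ^ 2 - C (T : ℚ) * X + C d) = 0 := by
      apply Algebra.leftMulMatrix_injective b
      rw [← Polynomial.aeval_algHom_apply, map_zero]
      exact hch
    have h2 : ε ^ 2 - (T : L) * ε + algebraMap ℚ L d = 0 := by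
      simpa using h1
    have h3 : η ^ 4 - (T : K) * η ^ 2 + (d : K) = 0 := by
      have := congrArg (fun z : L => (z : K)) h2
      simp at this
      rw [hε] at this
      rw [← this]; ring
    have hηQ : IsIntegral ℚ η := Algebra.IsIntegral.isIntegral η
    have hmin : minpoly ℚ η = X ^ 4 - C (T : ℚ) * X ^ 2 + C d := by
      have hm : (X ^ 4 - C (T : ℚ) * X ^ 2 + C d).Monic := by monicity!
      symm
      apply Polynomial.eq_of_monic_of_dvd_of_natDegree_le (minpoly.monic hηQ) hm
      · apply minpoly.dvd
        simpa using h3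
      · rw [hηdeg]; compute_degree
    have hdn : d = 1 := by
      have h4 : Module.finrank (IntermediateField.adjoin ℚ {η}) K = 1 := by
        have := Module.finrank_mul_finrank ℚ (IntermediateField.adjoin ℚ {η}) K
        rw [IntermediateField.adjoin.finrank hηQ, hηdeg, hK4] at this
        omega
      have h5 := Algebra.norm_eq_norm_adjoin ℚ η
      rw [h4, pow_one] at h5
      have h6 := Algebra.PowerBasis.norm_gen_eq_coeff_zero_minpoly
        (IntermediateField.adjoin.powerBasis hηQ)
      rw [IntermediateField.adjoin.powerBasis_gen, IntermediateField.minpoly_gen,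
        IntermediateField.adjoin.powerBasis_dim, hηdeg, ← h5, hηnorm, hmin] at h6
      simp at h6
      linear_combination -h6
    rw [hdn] at h3
    push_cast at h3
    linear_combination h3
  have hli : ∀ a b c d : ℤ, (a : K) + b * η + c * η ^ 2 + d * η ^ 3 = 0 →
      a = 0 ∧ b = 0 ∧ c = 0 ∧ d = 0 := by
    intro a b c d h
    have h1 := linearIndependent_pow (K := ℚ) η
    rw [hηdeg, Fintype.linearIndependent_iff] at h1
    have h2 := h1 ![(a : ℚ), b, c, d] (by
      simp [Fin.sum_univ_four, Algebra.smul_def]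
      linear_combination h)
    have e0 := h2 0
    have e1 := h2 1
    have e2 := h2 2
    have e3 := h2 3
    simp at e0 e1 e2 e3
    exact ⟨e0, e1, e2, e3⟩
  let v : ℕ → ℤ := fun n => if n = 0 then -1 else u (n - 1)
  have hv1 : ∀ n, v (n + 1) = u n := fun n => by simp [v]
  have hv : ∀ n, v n = T * u n - u (n + 1) := by
    intro n
    rcases n with _ | n
    · simp [v, hu0, hu1]
    · rw [hv1, hurec]; ring
  have hpow : ∀ n : ℕ, η ^ (2 * n) = (u n : K) * η ^ 2 - (v n : K) := by
    intro n
    induction n with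
    | zero => simp [v, hu0]
    | succ n ih =>
      have e : η ^ (2 * (n + 1)) = η ^ (2 * n) * η ^ 2 := by ring
      rw [e, ih, hv1, hv]
      push_cast
      linear_combination (u n : K) * hq
  refine ⟨![β * η ^ 2, β * η ^ 3 - (T + 1) * (β * η ^ 2), β, β * η - β * η ^ 2], ?_, ?_,
    ![fun k => if k % 2 = 0 then u (k / 2) else u (k / 2 + 1) + u (k / 2),
      fun k => if k % 2 = 0 then 0 else u (k / 2),
      fun k => if k % 2 = 0 then - v (k / 2) else 0,
      fun k => if k % 2 = 0 then 0 else - v (k / 2)], ?_, ?_⟩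
  · have g : ∀ i : Fin 4, β * η ^ (i : ℕ) ∈
        Submodule.span ℤ (Set.range fun i : Fin 4 => β * η ^ (i : ℕ)) :=
      fun i => Submodule.subset_span ⟨i, rfl⟩
    have g0 := g 0
    have g1 := g 1
    have g2 := g 2
    have g3 := g 3
    simp only [Fin.isValue, Fin.val_zero, Fin.val_one, Fin.val_two, pow_zero, pow_one, mul_one,
      show ((3 : Fin 4) : ℕ) = 3 from rfl] at g0 g1 g2 g3
    apply le_antisymm
    · rw [Submodule.span_le]
      rintro _ ⟨i, rfl⟩
      fin_cases i
      · exact g2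
      · have := Submodule.sub_mem _ g3 (Submodule.smul_mem _ (T + 1) g2)
        simpa [zsmul_eq_mul] using this
      · exact g0
      · exact Submodule.sub_mem _ g1 g2
    · generalize hw : (![β * η ^ 2, β * η ^ 3 - (T + 1) * (β * η ^ 2), β, β * η - β * η ^ 2] : Fin 4 → K) = w
      have m : ∀ i : Fin 4, w i ∈ Submodule.span ℤ (Set.range w) :=
        fun i => Submodule.subset_span ⟨i, rfl⟩
      have m0 := m 0
      have m1 := m 1
      have m2 := m 2
      have m3 := m 3
      have w0 : w 0 = β * η ^ 2 := by rw [← hw]; rfl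
      have w1 : w 1 = β * η ^ 3 - (T + 1) * (β * η ^ 2) := by rw [← hw]; rfl
      have w2 : w 2 = β := by rw [← hw]; rfl
      have w3 : w 3 = β * η - β * η ^ 2 := by rw [← hw]; rfl
      rw [Submodule.span_le]
      rintro _ ⟨i, rfl⟩
      fin_cases i
      · have : β * η ^ 0 = w 2 := by rw [w2]; ring
        exact (congrArg (· ∈ Submodule.span ℤ (Set.range w)) this).mpr (m2)
      · have : β * η ^ 1 = w 3 + w 0 := by rw [w3, w0]; ring
        exact (congrArg (· ∈ Submodule.span ℤ (Set.range w)) this).mpr (Submodule.add_mem _ m3 m0)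
      · have : β * η ^ 2 = w 0 := by rw [w0]
        exact (congrArg (· ∈ Submodule.span ℤ (Set.range w)) this).mpr (m0)
      · have : β * η ^ 3 = w 1 + (T + 1) • w 0 := by
          rw [w1, w0, zsmul_eq_mul]; push_cast; ring
        exact (congrArg (· ∈ Submodule.span ℤ (Set.range w)) this).mpr (Submodule.add_mem _ m1 (Submodule.smul_mem _ _ m0))
  · rw [Fintype.linearIndependent_iff]
    intro g hg
    simp [Fin.sum_univ_four] at hg
    have h0 := hli (g 2) (g 3) (g 0 - (T + 1) * g 1 - g 3) (g 1) (by
      apply mul_left_cancel₀ hβ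
      push_cast
      linear_combination hg)
    obtain ⟨e2, e3, e0, e1⟩ := h0
    rw [e1, e3] at e0
    intro i
    fin_cases i
    · simpa using e0
    · exact e1
    · exact e2
    · exact e3
  · intro k
    simp only [Fin.sum_univ_four]
    rcases Nat.even_or_odd' k with ⟨n, rfl | rfl⟩
    · have a1 : 2 * n % 2 = 0 := by omega
      have a2 : 2 * n / 2 = n := by omega
      simp [a1, a2, hpow n]
      ring
    · have a1 : (2 * n + 1) % 2 = 1 := by omega
      have a2 : (2 * n + 1) / 2 = n := by omega
      simp [a1, a2, pow_succ η (2 * n), hpow n]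
      have := congrArg (Int.cast : ℤ → K) (hv n)
      push_cast at this
      linear_combination (- β * η ^ 2) * this
  · intro n hn
    obtain ⟨m, rfl⟩ : ∃ m, n = m + 1 := ⟨n - 1, by omega⟩
    have a1 : 2 * (m + 1) % 2 = 0 := by omega
    have a2 : 2 * (m + 1) / 2 = m + 1 := by omega
    have a3 : (2 * (m + 1) + 1) % 2 = 1 := by omega
    have a4 : (2 * (m + 1) + 1) / 2 = m + 1 := by omega
    simp [a1, a2, a3, a4, hv1]
end

section
/- Let α be an algebraic integer that is not a root of unity, of degree n over ℚ, with minimal polynomial f(X) = X^n − s₁X^{n−1} − ⋯ − s_n, and set K = ℚ(α). Suppose there is a divisor t of n with t ≥ 2 such that s_i = 0 for every index i (1 ≤ i ≤ n) not divisible by t. Then for every integer k ≥ 1 with k ≡ 1 (mod t), we have d_k(α) ≤ |disc(1, α, …, α^{n−1})|; equivalently, every positive integer d such that α^k − 1 ∈ d·𝒪_K satisfies d ≤ |disc(1, α, …, α^{n−1})|. -/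
open Polynomial IntermediateField

/-- Proposition 8. Let `α` be an algebraic integer, not a root of
unity, of degree `n` over `ℚ`, with minimal polynomial
`X^n − s₁X^{n−1} − ⋯ − s_n`, and `K = ℚ(α)`. If `t ∣ n`, `t ≥ 2`, and `s_i = 0`
for every `i` not divisible by `t`, then for every `k ≥ 1` with
`k ≡ 1 (mod t)`, every positive integer `d` with `α^k − 1 ∈ d·𝒪_K` satisfies
`d ≤ |disc(1, α, …, α^{n−1})|`. -/
theorem dk_bounded_by_discriminant
    (K : Type*) [Field K] [NumberField K]
    (α : K) (hgen : (ℚ⟮α⟯ : IntermediateField ℚ K) = ⊤)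
    (hint : IsIntegral ℤ α) (hnru : ∀ j : ℕ, 0 < j → α ^ j ≠ 1)
    (n : ℕ) (hn : n = Module.finrank ℚ K)
    (s : Fin n → ℚ)
    (hmin : minpoly ℚ α = X ^ n - ∑ i : Fin n, C (s i) * X ^ (n - 1 - (i : ℕ)))
    (t : ℕ) (ht2 : 2 ≤ t) (htn : t ∣ n)
    (hs : ∀ i : Fin n, ¬ (t ∣ ((i : ℕ) + 1)) → s i = 0) :
    ∀ k : ℕ, 1 ≤ k → k % t = 1 →
      ∀ d : ℤ, 0 < d → IsIntegral ℤ ((α ^ k - 1) / (d : K)) →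
        (d : ℚ) ≤ |Algebra.discr ℚ (fun i : Fin n => α ^ (i : ℕ))| := by
  intro k hk hkt d hd hβ
  have hadj : Algebra.adjoin ℚ {α} = ⊤ := by
    rw [← IntermediateField.adjoin_simple_toSubalgebra_of_isAlgebraic
      (Algebra.IsAlgebraic.isAlgebraic (R := ℚ) α), hgen, IntermediateField.top_toSubalgebra]
  have hQ : IsIntegral ℚ α := hint.tower_top
  obtain ⟨B, hBg⟩ : ∃ B : PowerBasis ℚ K, B.gen = α :=
    ⟨PowerBasis.ofAdjoinEqTop hQ hadj, by simp⟩
  have hdim : n = B.dim := by rw [hn, B.finrank]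
  subst hdim
  subst hBg
  have hpos : 0 < B.dim := B.dim_pos
  have hfun : (fun i : Fin B.dim => B.gen ^ (i : ℕ)) = B.basis := by
    ext i; simp
  rw [hfun]
  set D := Algebra.discr ℚ B.basis with hD
  have hD0 : D ≠ 0 := Algebra.discr_not_zero_of_basis ℚ B.basis
  let i0 : Fin B.dim := ⟨0, hpos⟩
  let φ : K →ₗ[ℚ] ℚ := B.basis.coord i0
  have hφ : ∀ m : ℕ, (h : m < B.dim) → φ (B.gen ^ m) = if m = 0 then 1 else 0 := by
    intro m h
    have h1 : B.gen ^ m = B.basis ⟨m, h⟩ := by simp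
    rw [h1]
    simp only [φ, Module.Basis.coord_apply, Module.Basis.repr_self, Finsupp.single_apply, i0,
      Fin.mk.injEq]
  have hrel : B.gen ^ B.dim = ∑ i : Fin B.dim, s i • B.gen ^ (B.dim - 1 - (i : ℕ)) := by
    have h := minpoly.aeval ℚ B.gen
    rw [hmin] at h
    simp only [map_sub, map_pow, aeval_X, map_sum, map_mul, aeval_C] at h
    rw [sub_eq_zero] at h
    rw [h]
    exact Finset.sum_congr rfl fun i _ => (Algebra.smul_def _ _).symm
  have hzero : ∀ m : ℕ, ¬ t ∣ m → φ (B.gen ^ m) = 0 := by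
    intro m
    induction m using Nat.strong_induction_on with
    | _ m ih =>
      intro hm
      by_cases hlt : m < B.dim
      · rw [hφ m hlt, if_neg]
        rintro rfl
        exact hm (dvd_zero t)
      · push Not at hlt
        obtain ⟨c, rfl⟩ := Nat.exists_eq_add_of_le hlt
        rw [pow_add, hrel, Finset.sum_mul, map_sum]
        refine Finset.sum_eq_zero fun i _ => ?_
        rw [smul_mul_assoc, ← pow_add, map_smul]
        by_cases hti : t ∣ (i : ℕ) + 1
        · have hi := i.isLt
          rw [ih _ (by omega), smul_zero]
          intro hdv
          apply hm
          have : B.dim + c = (B.dim - 1 - (i : ℕ) + c) + ((i : ℕ) + 1) := by omega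
          rw [this]
          exact dvd_add hdv hti
        · rw [hs i hti, zero_smul]
  have hkz : φ (B.gen ^ k) = 0 := by
    apply hzero
    intro h
    have := Nat.mod_eq_zero_of_dvd h
    omega
  have h1 : φ 1 = 1 := by simpa using hφ 0 hpos
  have hmem := Algebra.discr_mul_isIntegral_mem_adjoin ℚ hint hβ
  have hint' : ∀ z ∈ Algebra.adjoin ℤ ({B.gen} : Set K), IsIntegral ℤ (φ z) := by
    intro z hz
    rw [Algebra.adjoin_singleton_eq_range_aeval] at hz
    obtain ⟨p, rfl⟩ := hz
    simp only [AlgHom.toRingHom_eq_coe, RingHom.coe_coe]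
    rw [aeval_eq_sum_range, map_sum]
    refine IsIntegral.sum _ fun m _ => ?_
    rw [map_zsmul]
    exact (PowerBasis.repr_gen_pow_isIntegral hint
      (minpoly.isIntegrallyClosed_eq_field_fractions' ℚ hint) m i0).smul _
  have h2 := hint' _ hmem
  have hdQ : (d : ℚ) ≠ 0 := by exact_mod_cast hd.ne'
  have h3 : φ (D • ((B.gen ^ k - 1) / (d : K))) = - (D / d) := by
    have : (B.gen ^ k - 1) / (d : K) = (d : ℚ)⁻¹ • (B.gen ^ k - 1) := by
      rw [Algebra.smul_def, div_eq_inv_mul]; simp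
    rw [this, map_smul, map_smul, map_sub, hkz, h1]
    simp only [smul_eq_mul]
    ring
  rw [← hD, h3] at h2
  obtain ⟨y, hy⟩ := IsIntegrallyClosed.isIntegral_iff.mp h2
  have hDy : D = -(y * d : ℚ) := by
    have : (y : ℚ) = -(D / d) := by simpa using hy
    rw [this]; field_simp
  have hy0 : y ≠ 0 := by
    rintro rfl
    apply hD0
    simpa using hDy
  have hy1 : (1 : ℚ) ≤ |(y : ℚ)| := by exact_mod_cast Int.one_le_abs hy0
  have hdp : (0 : ℚ) < d := by exact_mod_cast hd
  rw [hDy, abs_neg, abs_mul, abs_of_pos hdp]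
  nlinarith
end

section
/- Let α be an algebraic integer that is not a root of unity, of degree n over ℚ, with minimal polynomial f(X) = X^n − s₁X^{n−1} − ⋯ − s_n, and set K = ℚ(α). Suppose there is a divisor t of n with t ≥ 2 such that s_i = 0 for every index i (1 ≤ i ≤ n) not divisible by t, and suppose moreover that 𝒪_K = ℤ[α]. Then d_k(α) = 1 for every integer k ≥ 1 with k ≡ 1 (mod t); in particular, the set {k ≥ 1 : d_k(α) = d₁(α)} is infinite. -/
open Polynomial IntermediateField

/-- Proposition 8 (second part). Let `α` be an algebraic integer,
not a root of unity, of degree `n`, with minimal polynomial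
`X^n − s₁X^{n−1} − ⋯ − s_n`, `K = ℚ(α)`, `t ∣ n`, `t ≥ 2`, `s_i = 0` whenever
`t ∤ i`, and `𝒪_K = ℤ[α]`. Then `d_k(α) = 1` for every `k ≥ 1` with
`k ≡ 1 (mod t)`; in particular `{k ≥ 1 : d_k(α) = d₁(α)}` is infinite. -/
theorem dk_eq_one_for_monogenic
    (K : Type*) [Field K] [NumberField K]
    (α : K) (hgen : (ℚ⟮α⟯ : IntermediateField ℚ K) = ⊤)
    (hint : IsIntegral ℤ α) (hnru : ∀ j : ℕ, 0 < j → α ^ j ≠ 1)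
    (n : ℕ) (hn : n = Module.finrank ℚ K)
    (s : Fin n → ℚ)
    (hmin : minpoly ℚ α = X ^ n - ∑ i : Fin n, C (s i) * X ^ (n - 1 - (i : ℕ)))
    (t : ℕ) (ht2 : 2 ≤ t) (htn : t ∣ n)
    (hs : ∀ i : Fin n, ¬ (t ∣ ((i : ℕ) + 1)) → s i = 0)
    (hmono : Algebra.adjoin ℤ {α} = integralClosure ℤ K)
    (D : ℕ → ℤ)
    (hD : ∀ k : ℕ, 1 ≤ k →
      IsGreatest {d : ℤ | 0 < d ∧ IsIntegral ℤ ((α ^ k - 1) / (d : K))} (D k)) :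
    (∀ k : ℕ, 1 ≤ k → k % t = 1 → D k = 1) ∧
    {k : ℕ | 1 ≤ k ∧ D k = D 1}.Infinite := by
  have hn0 : 0 < n := hn ▸ Module.finrank_pos
  have key : ∀ k : ℕ, 1 ≤ k → k % t = 1 → D k = 1 := by
    intro k hk hkt
    obtain ⟨hd0, hdi⟩ := (hD k hk).1
    set d := D k
    have hdK : (d : K) ≠ 0 := by exact_mod_cast hd0.ne'
    have hmap : (minpoly ℤ α).map (algebraMap ℤ ℚ) = minpoly ℚ α :=
      (minpoly.isIntegrallyClosed_eq_field_fractions' ℚ hint).symm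
    set F := minpoly ℤ α with hF
    have hFm : F.Monic := minpoly.monic hint
    have hcoeff : ∀ j, ¬ t ∣ j → F.coeff j = 0 := by
      intro j hj
      have h1 : ((F.coeff j : ℤ) : ℚ) = (minpoly ℚ α).coeff j := by
        rw [← hmap, coeff_map]; rfl
      have h2 : (minpoly ℚ α).coeff j = 0 := by
        rw [hmin, coeff_sub, finset_sum_coeff, coeff_X_pow, if_neg (by rintro rfl; exact hj htn),
          Finset.sum_eq_zero, sub_zero]
        intro i _
        rw [coeff_C_mul, coeff_X_pow]
        split_ifs with h
        · rw [hs i, zero_mul]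
          intro hdiv
          apply hj
          have : j = n - ((i : ℕ) + 1) := by omega
          rw [this]
          exact Nat.dvd_sub htn hdiv
        · rw [mul_zero]
      rw [h2] at h1
      exact_mod_cast h1
    have ht0 : 0 < t := by omega
    have hexp : expand ℤ t (contract t F) = F := by
      ext j
      rw [coeff_expand ht0]
      split_ifs with h
      · rw [coeff_contract ht0.ne', Nat.div_mul_cancel h]
      · exact (hcoeff j h).symm
    set g := contract t F with hg
    have hgm : g.Monic := by
      rw [← hexp] at hFm
      exact (monic_expand_iff ht0).1 hFm
    have hFdeg : F.natDegree = n := by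
      rw [← hFm.natDegree_map (algebraMap ℤ ℚ), hmap, hn]
      exact (Field.primitive_element_iff_minpoly_natDegree_eq ℚ α).1 hgen
    have hgdeg : g.natDegree * t = n := by
      rw [← natDegree_expand, hexp, hFdeg]
    have hg1 : g ≠ 1 := by
      intro h
      rw [h] at hgdeg
      simp at hgdeg
      omega
    set r := (X ^ (k / t) : ℤ[X]) %ₘ g with hr
    have hrdeg : r.natDegree < g.natDegree := natDegree_modByMonic_lt _ hgm hg1
    have hFa : aeval α F = 0 := minpoly.aeval ℤ α
    have hak : aeval α (X * expand ℤ t r) = α ^ k := by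
      have h1 : expand ℤ t (r + g * ((X ^ (k / t) : ℤ[X]) /ₘ g)) = expand ℤ t (X ^ (k / t)) := by
        rw [hr, modByMonic_add_div]
      rw [map_add, map_mul, hexp] at h1
      have h2 := congrArg (aeval α) h1
      rw [map_add, map_mul, hFa, zero_mul, add_zero] at h2
      rw [map_mul, h2, aeval_X, expand_aeval, map_pow, aeval_X, ← pow_mul, ← pow_succ']
      congr 1
      have := Nat.div_add_mod k t
      omega
    have hb : (α ^ k - 1) / (d : K) ∈ Algebra.adjoin ℤ {α} := by
      rw [hmono]; exact hdi
    rw [Algebra.adjoin_singleton_eq_range_aeval] at hb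
    obtain ⟨P, hP⟩ := hb
    have hP : aeval α P = (α ^ k - 1) / (d : K) := hP
    have hF1 : F ≠ 1 := by
      intro h
      rw [h] at hFdeg
      simp at hFdeg
      omega
    set R := P %ₘ F with hR
    have hRdeg : R.natDegree < n := hFdeg ▸ natDegree_modByMonic_lt _ hFm hF1
    have hRa : aeval α R = (α ^ k - 1) / (d : K) := by
      rw [← hP, hR]
      have h2 := congrArg (aeval α) (modByMonic_add_div P F)
      rwa [map_add, map_mul, hFa, zero_mul, add_zero] at h2
    set Z := C d * R - X * expand ℤ t r + 1 with hZ
    have hZa : aeval α Z = 0 := by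
      rw [hZ, map_add, map_sub, hak, map_mul, hRa, map_one, aeval_C]
      simp only [algebraMap_int_eq, eq_intCast]
      field_simp
      ring
    have hXdeg : (X * expand ℤ t r).natDegree < n := by
      have h1 : (X * expand ℤ t r).natDegree ≤ 1 + r.natDegree * t := by
        refine natDegree_mul_le.trans ?_
        rw [natDegree_expand, natDegree_X]
      have h2 : (r.natDegree + 1) * t ≤ g.natDegree * t := Nat.mul_le_mul_right t hrdeg
      rw [add_mul] at h2
      omega
    have hZdeg : Z.natDegree < F.natDegree := by
      rw [hFdeg]
      have h1 := natDegree_add_le (C d * R - X * expand ℤ t r) 1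
      have h2 := natDegree_sub_le (C d * R) (X * expand ℤ t r)
      have h3 := natDegree_C_mul_le d R
      simp only [natDegree_one] at h1
      rw [← hZ] at h1
      omega
    have hZ0 : Z = 0 := by
      by_contra hne
      have hdvd : F ∣ Z := minpoly.isIntegrallyClosed_dvd hint hZa
      have := natDegree_le_of_dvd hdvd hne
      omega
    have h0 := congrArg (fun p => coeff p 0) hZ0
    simp [hZ] at h0
    have hunit : d * (- R.coeff 0) = 1 := by linarith
    exact Int.eq_one_of_mul_eq_one_right hd0.le hunit
  refine ⟨key, ?_⟩
  have hone : 1 % t = 1 := Nat.mod_eq_of_lt ht2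
  refine Set.infinite_of_injective_forall_mem (f := fun m : ℕ => 1 + t * m) ?_ ?_
  · intro a b h
    have h' : t * a = t * b := Nat.add_left_cancel h
    exact Nat.eq_of_mul_eq_mul_left (by omega) h'
  · intro m
    refine ⟨Nat.le_add_right 1 _, ?_⟩
    rw [key 1 le_rfl hone, key _ (Nat.le_add_right 1 _)]
    rw [Nat.add_mul_mod_self_left, hone]
end

section
/- Let α be an algebraic number of degree n over ℚ with minimal polynomial f(X) = X^n − s₁X^{n−1} − ⋯ − s_n, and suppose there is a divisor t of n with t ≥ 2 such that s_i = 0 for every index i (1 ≤ i ≤ n) not divisible by t. For each k ≥ 0 write α^k = y₀(k) + y₁(k)·α + ⋯ + y_{n−1}(k)·α^{n−1} with y_i(k) ∈ ℚ (the coordinates of α^k in the power basis {1, α, …, α^{n−1}} of ℚ(α)). Then y₀(k) = 0 for every integer k ≥ 1 with k ≡ 1 (mod t). -/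
open Polynomial

/-- Let `α` be an algebraic number of degree `n` with minimal
polynomial `X^n − s₁X^{n−1} − ⋯ − s_n`, and suppose `t ∣ n`, `t ≥ 2`, and
`s_i = 0` for every `i` not divisible by `t`. Writing
`α^k = y₀(k) + y₁(k)α + ⋯ + y_{n−1}(k)α^{n−1}` in the power basis, we have
`y₀(k) = 0` for every `k ≥ 1` with `k ≡ 1 (mod t)`. -/
theorem power_basis_constant_coordinate_vanishes
    (K : Type*) [Field K] [Algebra ℚ K]
    (α : K) (n : ℕ) (s : Fin n → ℚ)
    (hmin : minpoly ℚ α = X ^ n - ∑ i : Fin n, C (s i) * X ^ (n - 1 - (i : ℕ)))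
    (t : ℕ) (ht2 : 2 ≤ t) (htn : t ∣ n)
    (hs : ∀ i : Fin n, ¬ (t ∣ ((i : ℕ) + 1)) → s i = 0)
    (y : Fin n → ℕ → ℚ)
    (hy : ∀ k : ℕ, α ^ k = ∑ i : Fin n, algebraMap ℚ K (y i k) * α ^ (i : ℕ)) :
    ∀ k : ℕ, 1 ≤ k → k % t = 1 → ∀ i : Fin n, (i : ℕ) = 0 → y i k = 0 := by
  have hdeg : (minpoly ℚ α).natDegree = n := by
    rw [hmin]
    rcases Nat.eq_zero_or_pos n with h0 | hn
    · subst h0; simp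
    apply natDegree_eq_of_degree_eq_some
    rw [degree_sub_eq_left_of_degree_lt, degree_X_pow]
    rw [degree_X_pow]
    refine lt_of_le_of_lt (degree_sum_le _ _) ?_
    rw [Finset.sup_lt_iff (by exact WithBot.bot_lt_coe n)]
    intro i _
    refine lt_of_le_of_lt (degree_C_mul_X_pow_le _ _) ?_
    have := i.2
    exact_mod_cast (by omega : n - 1 - (i : ℕ) < n)
  have hli : LinearIndependent ℚ (fun i : Fin n => α ^ (i : ℕ)) := by
    have h := linearIndependent_pow (K := ℚ) α
    rw [hdeg] at h
    exact h
  have huniq : ∀ c d : Fin n → ℚ, ∑ i : Fin n, algebraMap ℚ K (c i) * α ^ (i : ℕ)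
      = ∑ i : Fin n, algebraMap ℚ K (d i) * α ^ (i : ℕ) → ∀ i, c i = d i := by
    intro c d h i
    have h2 := Fintype.linearIndependent_iff.1 hli (fun i => c i - d i) (by
      simp only [Algebra.smul_def, map_sub, sub_mul, Finset.sum_sub_distrib]
      rw [h, sub_self]) i
    exact sub_eq_zero.1 h2
  have hroot : α ^ n = ∑ j : Fin n, algebraMap ℚ K (s j) * α ^ (n - 1 - (j : ℕ)) := by
    have h := minpoly.aeval ℚ α
    rw [hmin] at h
    simp only [map_sub, map_sum, map_mul, map_pow, aeval_X, aeval_C] at h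
    exact sub_eq_zero.1 h
  have key : ∀ k : ℕ, ∀ i : Fin n, ¬ ((i : ℕ) ≡ k [MOD t]) → y i k = 0 := by
    intro k
    induction k using Nat.strong_induction_on with
    | _ k ih =>
      intro i hi
      by_cases hk : k < n
      · have h := huniq (fun i => y i k) (fun i => if i = ⟨k, hk⟩ then 1 else 0) (by
          rw [← hy k, Finset.sum_eq_single ⟨k, hk⟩]
          · simp
          · intro b _ hb
            simp [hb]
          · simp) i
        rw [h, if_neg]
        rintro rfl
        exact hi rfl
      · have hk' : n ≤ k := not_lt.1 hk
        have h := huniq (fun i => y i k) (fun i => ∑ j : Fin n, s j * y i (k - 1 - (j : ℕ))) (by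
          rw [← hy k]
          have e : α ^ k = ∑ j : Fin n, algebraMap ℚ K (s j) * α ^ (k - 1 - (j : ℕ)) := by
            rw [show k = (k - n) + n by omega, pow_add, hroot, Finset.mul_sum]
            refine Finset.sum_congr rfl fun j _ => ?_
            have := j.2
            rw [show k - n + n - 1 - (j : ℕ) = (k - n) + (n - 1 - (j : ℕ)) by omega, pow_add]
            ring
          rw [e]
          simp only [map_sum, map_mul, Finset.sum_mul]
          rw [Finset.sum_comm]
          refine Finset.sum_congr rfl fun j _ => ?_
          rw [hy, Finset.mul_sum]
          refine Finset.sum_congr rfl fun i _ => ?_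
          ring) i
        rw [h]
        refine Finset.sum_eq_zero fun j _ => ?_
        have hj := j.2
        by_cases hd : t ∣ (j : ℕ) + 1
        · rw [ih (k - 1 - (j : ℕ)) (by omega) i, mul_zero]
          intro hc
          apply hi
          have h3 : k - 1 - (j : ℕ) ≡ k [MOD t] := by
            rw [Nat.modEq_iff_dvd' (by omega)]
            rwa [show k - (k - 1 - (j : ℕ)) = (j : ℕ) + 1 by omega]
          exact hc.trans h3
        · rw [hs j hd, zero_mul]
  intro k _ hk i hi
  apply key
  intro h
  rw [hi] at h
  unfold Nat.ModEq at h
  rw [hk, Nat.zero_mod] at h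
  omega
end

section
/- Let T be a nonzero integer and let u be the Lucas sequence with parameters (T, 1). Then for all integers n, m ≥ 0, the integer u(n+1) + u(n) divides u(N+1) + u(N), where N = 2nm + n + m (so that 2N + 1 = (2n+1)(2m+1)). -/
/-- For the Lucas sequence `u` with parameters `(T, 1)` and any
`n, m ≥ 0`, the integer `u(n+1) + u(n)` divides `u(N+1) + u(N)` where
`N = 2nm + n + m`. -/
theorem lucas_odd_index_divisibility
    (T : ℤ) (hT : T ≠ 0)
    (u : ℕ → ℤ) (hu0 : u 0 = 0) (hu1 : u 1 = 1)
    (hurec : ∀ k : ℕ, u (k + 2) = T * u (k + 1) - 1 * u k) :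
    ∀ n m : ℕ,
      u (n + 1) + u n ∣ u (2 * n * m + n + m + 1) + u (2 * n * m + n + m) := by
  have add : ∀ b a : ℕ, u (a + b + 1) = u (a + 1) * u (b + 1) - u a * u b := by
    intro b
    induction b with
    | zero => intro a; simp [hu0, hu1]
    | succ b ih =>
      intro a
      have h1 := ih (a + 1)
      have h2 := hurec a
      have h3 := hurec b
      have e : a + (b + 1) + 1 = a + 1 + b + 1 := by ring
      rw [e, h1, h2, h3]
      ring
  intro n m
  induction m with
  | zero => simp
  | succ m ih =>
    have e : 2 * n * (m + 1) + n + (m + 1) = (2 * n * m + n + m) + (n + n) + 1 := by ring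
    rw [e]
    generalize 2 * n * m + n + m = k at ih
    have h1 := add (n + n) k
    have h2 := add (n + n) (k + 1)
    have h3 := add n n
    have e2 : k + (n + n) + 1 + 1 = k + 1 + (n + n) + 1 := by ring
    obtain ⟨c, hc⟩ := ih
    rw [e2, h1, h2, h3]
    refine ⟨(u (k + 1 + 1) + u (k + 1)) * (u (n + 1) - u n) - c * u (n + n), ?_⟩
    linear_combination (-u (n + n)) * hc
end
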